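/- Let ρ be a binary constant-length substitution of length L ≥ 2 with Fourier matrix B(k), and suppose the polynomials Q and R are not equal. Then for Lebesgue-almost every k ∈ ℝ the matrices B(L^m k) are invertible for all m ≥ 0 and lim_{n→∞} (1/n)·log‖(B(k)·B(Lk)···B(L^{n−1}k))^{−1}‖ = 0; equivalently, the maximal Lyapunov exponent of the outward cocycle is χ_max(k) = log√L for almost every k. -/

import Mathlib

open Filter Polynomial

noncomputable section

/-- `e k = exp(2πik)`, the point on the unit circle with angle `2πk`. -/
def e (k : ℝ) : ℂ := Complex.exp (2 * Real.pi * Complex.I * k)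

/-- Coincidence positions of type `a` (letter `a` encoded as `0`, `b` as `1`). -/
def Ca {L : ℕ} (wa wb : Fin L → Fin 2) : Finset (Fin L) :=
  Finset.univ.filter fun i => wa i = 0 ∧ wb i = 0

/-- Coincidence positions of type `b`. -/
def Cb {L : ℕ} (wa wb : Fin L → Fin 2) : Finset (Fin L) :=
  Finset.univ.filter fun i => wa i = 1 ∧ wb i = 1

/-- Bijective positions where `(w_a)_i = a` and `(w_b)_i = b`. -/
def Pa {L : ℕ} (wa wb : Fin L → Fin 2) : Finset (Fin L) :=
  Finset.univ.filter fun i => wa i = 0 ∧ wb i = 1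

/-- Bijective positions where `(w_a)_i = b` and `(w_b)_i = a`. -/
def Pb {L : ℕ} (wa wb : Fin L → Fin 2) : Finset (Fin L) :=
  Finset.univ.filter fun i => wa i = 1 ∧ wb i = 0

/-- The polynomial `∑_{z ∈ S} X^z` associated with a set of positions. -/
def posPoly {L : ℕ} (S : Finset (Fin L)) : Polynomial ℂ :=
  ∑ z ∈ S, Polynomial.X ^ (z : ℕ)

/-- The Fourier matrix `B(k)` of the substitution determined by `wa, wb`. -/
def FourierB {L : ℕ} (wa wb : Fin L → Fin 2) (k : ℝ) : Matrix (Fin 2) (Fin 2) ℂ :=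
  !![(posPoly (Ca wa wb) + posPoly (Pa wa wb)).eval (e k),
     (posPoly (Ca wa wb) + posPoly (Pb wa wb)).eval (e k);
     (posPoly (Cb wa wb) + posPoly (Pb wa wb)).eval (e k),
     (posPoly (Cb wa wb) + posPoly (Pa wa wb)).eval (e k)]

/-- The logarithmic Mahler measure `m(f) = ∫₀¹ log |f(e^{2πik})| dk`. -/
def logMahler (f : Polynomial ℂ) : ℝ :=
  ∫ k in (0:ℝ)..1, Real.log (‖f.eval (e k)‖)

/-- The operator norm of a matrix, induced by the Euclidean norm on `ℂ²`. -/
def opNorm (M : Matrix (Fin 2) (Fin 2) ℂ) : ℝ :=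
  ‖Matrix.toEuclideanCLM (𝕜 := ℂ) M‖

/-- The (forward) matrix product `B(k) · B(Lk) ⋯ B(L^{n-1}k)` of the outward cocycle. -/
def cocycleProd {L : ℕ} (wa wb : Fin L → Fin 2) (k : ℝ) (n : ℕ) :
    Matrix (Fin 2) (Fin 2) ℂ :=
  (((List.range n).map fun m => FourierB wa wb ((L : ℝ) ^ m * k))).prod



open MeasureTheory

section birk
set_option linter.unusedSectionVars false
variable {α : Type*} [MeasurableSpace α] {μ : Measure α} [IsProbabilityMeasure μ]

/-- running maximum of Birkhoff sums -/
noncomputable def runMax (T : α → α) (f : α → ℝ) : ℕ → α → ℝ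
  | 0 => fun _ => 0
  | n + 1 => fun x => max 0 (f x + runMax T f n (T x))

lemma runMax_nonneg (T : α → α) (f : α → ℝ) (n : ℕ) (x : α) : 0 ≤ runMax T f n x := by
  cases n <;> simp [runMax]

lemma runMax_mono (T : α → α) (f : α → ℝ) (n : ℕ) : ∀ x, runMax T f n x ≤ runMax T f (n+1) x := by
  induction n with
  | zero => intro x; simp [runMax]
  | succ n ih =>
    intro x
    have := ih (T x)
    exact max_le_max le_rfl (by linarith)

lemma sum_le_runMax (T : α → α) (f : α → ℝ) (n : ℕ) : ∀ x, birkhoffSum T f n x ≤ runMax T f n x := by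
  induction n with
  | zero => intro x; simp [runMax]
  | succ n ih =>
    intro x
    have := ih (T x)
    rw [birkhoffSum_succ', runMax]
    exact le_max_of_le_right (by linarith)

lemma runMax_measurable {T : α → α} {f : α → ℝ} (hT : Measurable T) (hf : Measurable f) (n : ℕ) :
    Measurable (runMax T f n) := by
  induction n with
  | zero => exact measurable_const
  | succ n ih => exact measurable_const.max (hf.add (ih.comp hT))

lemma runMax_integrable {T : α → α} {f : α → ℝ} (hT : MeasurePreserving T μ μ)
    (hf : Integrable f μ) (n : ℕ) :
    Integrable (runMax T f n) μ := by
  induction n with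
  | zero => exact integrable_zero _ _ _
  | succ n ih =>
    exact (integrable_zero _ _ _).sup (hf.add (hT.integrable_comp_of_integrable ih))

lemma birk_bdd {T : α → α} {f : α → ℝ} (hT : Ergodic T μ) (hfm : Measurable f)
    (hf : Integrable f μ) (hneg : ∫ x, f x ∂μ < 0) :
    ∀ᵐ x ∂μ, ∃ C : ℝ, ∀ n, birkhoffSum T f n x ≤ C := by
  set A : Set α := {x | ∀ C : ℕ, ∃ n, (C : ℝ) < runMax T f n x} with hA
  have hTm := hT.toMeasurePreserving
  have hAm : MeasurableSet A := by
    have : A = ⋂ C : ℕ, ⋃ n, {x | (C : ℝ) < runMax T f n x} := by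
      ext x; simp [hA]
    rw [this]
    exact MeasurableSet.iInter fun C => MeasurableSet.iUnion fun n =>
      measurableSet_lt measurable_const (runMax_measurable hTm.measurable hfm n)
  have hinv : T ⁻¹' A = A := by
    ext x
    simp only [hA, Set.mem_preimage, Set.mem_ofPred_eq]
    constructor
    · intro h C
      obtain ⟨N, hN⟩ := exists_nat_gt (C - f x)
      obtain ⟨n, hn⟩ := h N
      refine ⟨n+1, ?_⟩
      rw [runMax]
      exact lt_max_of_lt_right (by linarith)
    · intro h C
      obtain ⟨N, hN⟩ := exists_nat_gt (max 0 (C + f x))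
      obtain ⟨n, hn⟩ := h N
      have h1 := hn.trans_le (runMax_mono T f n x)
      rw [runMax] at h1
      refine ⟨n, ?_⟩
      have h3 := le_max_right 0 (C + f x)
      have h4 := le_max_left 0 (C + f x)
      rcases lt_max_iff.1 h1 with h2 | h2 <;> linarith
  have hmem : (∀ᵐ x ∂μ, x ∈ A) ∨ ∀ᵐ x ∂μ, x ∉ A :=
    hT.toPreErgodic.ae_mem_or_ae_notMem hAm hinv
  rcases hmem with h | h
  · exfalso
    have hI := fun n => runMax_integrable hTm hf n
    have hIT : ∀ n, Integrable (fun x => runMax T f n (T x)) μ :=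
      fun n => hTm.integrable_comp_of_integrable (hI n)
    have hform : ∀ n x, runMax T f (n+1) x - runMax T f n (T x) = max (-runMax T f n (T x)) (f x) := by
      intro n x
      rw [runMax, max_sub_sub_right 0 _ _ |>.symm]
      congr 1 <;> ring
    have hlim : Tendsto (fun n => ∫ x, (runMax T f (n+1) x - runMax T f n (T x)) ∂μ) atTop
        (nhds (∫ x, f x ∂μ)) := by
      refine tendsto_integral_of_dominated_convergence (fun x => |f x|)
        (fun n => ((hI (n+1)).sub (hIT n)).aestronglyMeasurable) hf.abs ?_ ?_
      · intro n
        refine Eventually.of_forall fun x => ?_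
        rw [hform, Real.norm_eq_abs]
        have := runMax_nonneg T f n (T x)
        rw [abs_le]
        constructor
        · exact le_max_of_le_right (neg_abs_le _)
        · exact max_le (by linarith [abs_nonneg (f x)]) (le_abs_self _)
      · filter_upwards [h] with x hx
        have hx' : T x ∈ A := by rw [← hinv] at hx; exact hx
        obtain ⟨N, hN⟩ := exists_nat_gt (-f x)
        obtain ⟨n, hn⟩ := hx' N
        refine tendsto_const_nhds.congr' ?_
        filter_upwards [eventually_ge_atTop n] with m hm
        have := (monotone_nat_of_le_succ (fun n => runMax_mono T f n (T x))) hm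
        simp only at this
        rw [hform, max_eq_right]
        linarith
    have hge : ∀ n, 0 ≤ ∫ x, (runMax T f (n+1) x - runMax T f n (T x)) ∂μ := by
      intro n
      rw [integral_sub (hI _) (hIT n)]
      have : ∫ x, runMax T f n (T x) ∂μ = ∫ x, runMax T f n x ∂μ := by
        have h1 := integral_map (μ := μ) hTm.measurable.aemeasurable (f := runMax T f n)
          (by rw [hTm.map_eq]; exact (hI n).aestronglyMeasurable)
        rw [hTm.map_eq] at h1
        exact h1.symm
      rw [this, sub_nonneg]
      exact integral_mono (hI _) (hI _) (runMax_mono T f n)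
    have := ge_of_tendsto' hlim hge
    linarith
  · filter_upwards [h] with x hx
    simp only [hA, Set.mem_ofPred_eq, not_forall, not_exists, not_lt] at hx
    obtain ⟨C, hC⟩ := hx
    exact ⟨C, fun n => (sum_le_runMax T f n x).trans (hC n)⟩

lemma birk_upper {T : α → α} {f : α → ℝ} (hT : Ergodic T μ) (hfm : Measurable f)
    (hf : Integrable f μ) :
    ∀ᵐ x ∂μ, ∀ ε > 0, ∃ C : ℝ, ∀ n : ℕ, birkhoffSum T f n x - n * ∫ x, f x ∂μ ≤ C + ε * n := by
  have key : ∀ N : ℕ, ∀ᵐ x ∂μ, ∃ C : ℝ, ∀ n : ℕ,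
      birkhoffSum T f n x - n * ∫ x, f x ∂μ ≤ C + (1 / ((N : ℝ) + 1)) * n := by
    intro N
    have hpos : (0 : ℝ) < 1 / ((N : ℝ) + 1) := by positivity
    have hi : ∫ x, (f x - (∫ x, f x ∂μ + 1 / ((N : ℝ) + 1))) ∂μ < 0 := by
      rw [integral_sub hf (integrable_const _)]
      simp
      positivity
    have := birk_bdd hT (hfm.sub_const _) (hf.sub (integrable_const _)) hi
    filter_upwards [this] with x ⟨C, hC⟩
    refine ⟨C, fun n => ?_⟩
    have h := hC n
    simp only [birkhoffSum, Finset.sum_sub_distrib, Finset.sum_const, Finset.card_range,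
      nsmul_eq_mul] at h ⊢
    linarith
  filter_upwards [ae_all_iff.2 key] with x hx ε hε
  obtain ⟨N, hN⟩ := exists_nat_one_div_lt hε
  obtain ⟨C, hC⟩ := hx N
  refine ⟨C, fun n => (hC n).trans ?_⟩
  gcongr

lemma birk_main {T : α → α} {f : α → ℝ} (hT : Ergodic T μ) (hfm : Measurable f)
    (hf : Integrable f μ) :
    ∀ᵐ x ∂μ, ∀ ε > 0, ∃ C : ℝ, ∀ n : ℕ, |birkhoffSum T f n x - n * ∫ x, f x ∂μ| ≤ C + ε * n := by
  filter_upwards [birk_upper hT hfm hf, birk_upper hT hfm.neg hf.neg] with x h1 h2 ε hε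
  obtain ⟨C, hC⟩ := h1 ε hε
  obtain ⟨D, hD⟩ := h2 ε hε
  refine ⟨max C D, fun n => abs_le.2 ⟨?_, ?_⟩⟩
  · have := hD n
    simp only [birkhoffSum, Pi.neg_apply, Finset.sum_neg_distrib, integral_neg] at this ⊢
    linarith [le_max_right C D]
  · linarith [hC n, le_max_left C D]
end birk
lemma e_eq (k : ℝ) : e k = (AddCircle.toCircle (k : UnitAddCircle) : ℂ) := by
  rw [AddCircle.toCircle_apply_mk, Circle.coe_exp, e]
  push_cast
  congr 1
  ring

lemma e_circleMap (k : ℝ) : e k = circleMap 0 1 (2 * Real.pi * k) := by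
  rw [e, circleMap]
  push_cast
  simp only [one_mul, zero_add]
  congr 1
  ring

lemma ae_of_ae_circle {P : UnitAddCircle → Prop} (h : ∀ᵐ x, P x) : ∀ᵐ k : ℝ, P (k : UnitAddCircle) := by
  have h1 : ∀ n : ℤ, ∀ᵐ k : ℝ ∂(volume.restrict (Set.Ioc (n : ℝ) (n + 1))), P (k : UnitAddCircle) :=
    fun n => (UnitAddCircle.measurePreserving_mk (n : ℝ)).quasiMeasurePreserving.ae h
  have h2 := (ae_restrict_iUnion_iff (μ := (volume : Measure ℝ)) (fun n : ℤ => Set.Ioc (n : ℝ) (n + 1))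
    (fun k => P (k : UnitAddCircle))).2 h1
  rwa [iUnion_Ioc_intCast, Measure.restrict_univ] at h2

lemma e_pow (L m : ℕ) (k : ℝ) :
    e ((L : ℝ) ^ m * k) = (AddCircle.toCircle ((fun y : UnitAddCircle => L • y)^[m] (k : UnitAddCircle)) : ℂ) := by
  rw [e_eq]
  congr 2
  rw [smul_iterate]
  have : (L ^ m • (k : UnitAddCircle)) = ((L ^ m • k : ℝ) : UnitAddCircle) := by
    rw [AddCircle.coe_nsmul]
  change _ = L ^ m • (k : UnitAddCircle)
  rw [this]
  simp

lemma integrable_log (F : ℂ[X]) :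
    Integrable (fun x : UnitAddCircle => Real.log ‖F.eval (AddCircle.toCircle x : ℂ)‖) := by
  have h := (intervalIntegrable_mahlerMeasure F).comp_mul_left (c := 2 * Real.pi)
  have h2 : IntervalIntegrable (fun x ↦ Real.log ‖F.eval (circleMap 0 1 (2 * Real.pi * x))‖) volume 0 1 := by
    convert h using 1
    · simp
    · field_simp
  have h3 := (UnitAddCircle.measurePreserving_mk 0)
  rw [intervalIntegrable_iff_integrableOn_Ioc_of_le zero_le_one] at h2
  rw [← h3.integrable_comp]
  · rw [zero_add]
    refine h2.congr (Eventually.of_forall fun x => ?_)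
    change Real.log _ = Real.log _
    rw [← e_eq, e_circleMap]
  · refine (Measurable.aestronglyMeasurable ?_)
    apply Real.measurable_log.comp
    apply Continuous.measurable
    have := AddCircle.continuous_toCircle (T := 1)
    fun_prop

lemma integral_log_poly (F : ℂ[X]) :
    ∫ x : UnitAddCircle, Real.log ‖F.eval (AddCircle.toCircle x : ℂ)‖ = F.logMahlerMeasure := by
  rw [← UnitAddCircle.intervalIntegral_preimage 0, logMahlerMeasure_def, Real.circleAverage_def]
  simp_rw [← e_eq, e_circleMap]
  rw [intervalIntegral.integral_comp_mul_left (fun x => Real.log ‖F.eval (circleMap 0 1 x)‖) (by positivity)]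
  simp

lemma ae_ne_zero (F : ℂ[X]) (hF : F ≠ 0) : ∀ᵐ x : UnitAddCircle, F.eval (AddCircle.toCircle x : ℂ) ≠ 0 := by
  have hfin : {x : UnitAddCircle | F.eval (AddCircle.toCircle x : ℂ) = 0}.Finite := by
    have : {z : ℂ | F.eval z = 0}.Finite := by
      simpa [IsRoot] using Polynomial.finite_setOfPred_isRoot hF
    refine this.preimage (f := fun x : UnitAddCircle => (AddCircle.toCircle x : ℂ)) ?_
    exact (Subtype.coe_injective.comp (AddCircle.injective_toCircle one_ne_zero)).injOn
  have : ConnectedSpace UnitAddCircle :=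
    Function.Surjective.connectedSpace (f := ((↑) : ℝ → UnitAddCircle)) QuotientAddGroup.mk_surjective
      (AddCircle.continuous_mk' 1)
  have : Nontrivial UnitAddCircle := by
    refine ⟨⟨((1 / 2 : ℝ) : UnitAddCircle), 0, fun h => ?_⟩⟩
    obtain ⟨n, hn⟩ := (AddCircle.coe_eq_zero_iff 1).1 h
    have h2 : (2 * n : ℝ) = 1 := by
      simp at hn
      rw [hn]; norm_num
    have h3 : 2 * n = 1 := by exact_mod_cast h2
    omega
  have := hfin.measure_zero (volume : Measure UnitAddCircle)
  rw [ae_iff]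
  simpa using this

lemma erg_circle (L : ℕ) (hL : 2 ≤ L) : Ergodic (fun y : UnitAddCircle => L • y) volume :=
  AddCircle.ergodic_nsmul (by omega)

lemma prob_circle : IsProbabilityMeasure (volume : Measure UnitAddCircle) :=
  ⟨UnitAddCircle.measure_univ⟩

lemma ae_iter {T : UnitAddCircle → UnitAddCircle} (hT : MeasurePreserving T) (F : ℂ[X]) (hF0 : F ≠ 0) :
    ∀ᵐ x : UnitAddCircle, ∀ m : ℕ, F.eval (AddCircle.toCircle (T^[m] x) : ℂ) ≠ 0 := by
  refine ae_all_iff.2 fun m => ?_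
  have h := (hT.iterate m).quasiMeasurePreserving
  obtain ⟨p, hp⟩ : ∃ p : UnitAddCircle → Prop, p = fun x => F.eval (AddCircle.toCircle x : ℂ) ≠ 0 := ⟨_, rfl⟩
  have h1 : ∀ᵐ x, p x := by rw [hp]; exact ae_ne_zero F hF0
  have h2 := h.ae h1
  rw [hp] at h2
  exact h2

lemma poly_bound_circle (L : ℕ) (hL : 2 ≤ L) (F : ℂ[X]) (T : UnitAddCircle → UnitAddCircle)
    (hTdef : T = fun y => L • y) (f : UnitAddCircle → ℝ)
    (hf : f = fun x : UnitAddCircle => Real.log ‖F.eval (AddCircle.toCircle x : ℂ)‖) (hF0 : F ≠ 0) :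
    ∀ᵐ x : UnitAddCircle,
      (∀ m : ℕ, F.eval (AddCircle.toCircle (T^[m] x) : ℂ) ≠ 0) ∧
      ∀ ε > 0, ∃ C : ℝ, ∀ n : ℕ, |birkhoffSum T f n x - n * F.logMahlerMeasure| ≤ C + ε * n := by
  have hT : Ergodic T := by rw [hTdef]; exact erg_circle L hL
  have hmeas : Measurable f := by
    rw [hf]
    apply Real.measurable_log.comp
    apply Continuous.measurable
    have := AddCircle.continuous_toCircle (T := 1)
    fun_prop
  have hfint : Integrable f := by rw [hf]; exact integrable_log F
  have hI : ∫ x, f x = F.logMahlerMeasure := by rw [hf]; exact integral_log_poly F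
  have := prob_circle
  have h1 := birk_main hT hmeas hfint
  rw [hI] at h1
  have h2 := ae_iter hT.toMeasurePreserving F hF0
  filter_upwards [h1, h2] with x hx1 hx2
  exact ⟨hx2, hx1⟩

lemma poly_bound (L : ℕ) (hL : 2 ≤ L) (F : ℂ[X]) (hF : 1 ≤ ‖F.leadingCoeff‖) :
    ∀ᵐ k : ℝ, (∀ m : ℕ, F.eval (e ((L : ℝ) ^ m * k)) ≠ 0) ∧
      ∀ ε > 0, ∃ C > 0, ∀ j n : ℕ, j ≤ n →
        ∏ m ∈ Finset.range j, ‖F.eval (e ((L : ℝ) ^ m * k))‖ ≤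
        C * Real.exp (ε * n) * ∏ m ∈ Finset.range n, ‖F.eval (e ((L : ℝ) ^ m * k))‖ := by
  have hF0 : F ≠ 0 := by
    rintro rfl
    norm_num at hF
  obtain ⟨T, hT⟩ : ∃ T : UnitAddCircle → UnitAddCircle, T = fun y => L • y := ⟨_, rfl⟩
  obtain ⟨f, hf⟩ : ∃ f : UnitAddCircle → ℝ,
    f = fun x : UnitAddCircle => Real.log ‖F.eval (AddCircle.toCircle x : ℂ)‖ := ⟨_, rfl⟩
  have h := ae_of_ae_circle (poly_bound_circle L hL F T hT f hf hF0)
  filter_upwards [h] with k hk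
  obtain ⟨hk2, hk1⟩ := hk
  have he : ∀ m : ℕ, e ((L : ℝ) ^ m * k) = (AddCircle.toCircle (T^[m] (k : UnitAddCircle)) : ℂ) := by
    intro m; rw [hT]; exact e_pow L m k
  simp only [he]
  refine ⟨hk2, fun ε hε => ?_⟩
  obtain ⟨C, hC⟩ := hk1 (ε / 2) (by positivity)
  have hM : 0 ≤ F.logMahlerMeasure := by
    rw [logMahlerMeasure_eq_log_MahlerMeasure]
    exact Real.log_nonneg (one_le_mahlerMeasure_of_one_le_norm_leadingCoeff hF)
  refine ⟨Real.exp (2 * C), Real.exp_pos _, fun j n hjn => ?_⟩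
  have hprod : ∀ n : ℕ,
      ∏ m ∈ Finset.range n, ‖F.eval (AddCircle.toCircle (T^[m] (k : UnitAddCircle)) : ℂ)‖
      = Real.exp (birkhoffSum T f n k) := by
    intro n
    rw [birkhoffSum, Real.exp_sum]
    refine Finset.prod_congr rfl fun m _ => ?_
    rw [hf]
    exact (Real.exp_log (norm_pos_iff.2 (hk2 m))).symm
  rw [hprod, hprod, ← Real.exp_add, ← Real.exp_add, Real.exp_le_exp]
  have ha := (abs_le.1 (hC j)).2
  have hb := (abs_le.1 (hC n)).1
  have hjn' : (j : ℝ) ≤ n := by exact_mod_cast hjn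
  have hc := mul_le_mul_of_nonneg_right hjn' hM
  have hd := mul_le_mul_of_nonneg_left hjn' hε.le
  linarith
/-- change of basis -/
def PP : Matrix (Fin 2) (Fin 2) ℂ := !![1, 1/2; -1, 1/2]
/-- inverse change of basis -/
def PI : Matrix (Fin 2) (Fin 2) ℂ := !![1/2, -1/2; 1, 1]

lemma PI_PP : PI * PP = 1 := by
  ext i j; fin_cases i <;> fin_cases j <;> norm_num [PI, PP, Matrix.mul_apply, Fin.sum_univ_two]

lemma PP_PI : PP * PI = 1 := by
  ext i j; fin_cases i <;> fin_cases j <;> norm_num [PI, PP, Matrix.mul_apply, Fin.sum_univ_two]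

lemma opNorm_mul_le (A B : Matrix (Fin 2) (Fin 2) ℂ) : opNorm (A * B) ≤ opNorm A * opNorm B := by
  unfold opNorm
  rw [map_mul]
  exact norm_mul_le _ _

lemma opNorm_nonneg (A : Matrix (Fin 2) (Fin 2) ℂ) : 0 ≤ opNorm A := norm_nonneg _

lemma entry_le_opNorm (A : Matrix (Fin 2) (Fin 2) ℂ) (i j : Fin 2) : ‖A i j‖ ≤ opNorm A := by
  have h := (Matrix.toEuclideanCLM (𝕜 := ℂ) A).le_opNorm (EuclideanSpace.single j 1)
  rw [EuclideanSpace.norm_single, norm_one, mul_one] at h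
  refine le_trans ?_ h
  refine le_trans ?_ (PiLp.norm_apply_le _ i)
  rw [Matrix.ofLp_toEuclideanCLM]
  simp

lemma opNorm_le_sum (A : Matrix (Fin 2) (Fin 2) ℂ) :
    opNorm A ≤ ‖A 0 0‖ + ‖A 0 1‖ + ‖A 1 0‖ + ‖A 1 1‖ := by
  refine ContinuousLinearMap.opNorm_le_bound _ (by positivity) fun x => ?_
  have h0 : ‖x 0‖ ≤ ‖x‖ := PiLp.norm_apply_le x 0
  have h1 : ‖x 1‖ ≤ ‖x‖ := PiLp.norm_apply_le x 1
  have hy : ∀ y : EuclideanSpace ℂ (Fin 2), ‖y‖ ≤ ‖y 0‖ + ‖y 1‖ := by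
    intro y
    rw [EuclideanSpace.norm_eq, Fin.sum_univ_two]
    apply Real.sqrt_le_iff.2
    constructor
    · positivity
    · nlinarith [norm_nonneg (y 0), norm_nonneg (y 1)]
  refine (hy _).trans ?_
  have hc : ∀ i, (Matrix.toEuclideanCLM (𝕜 := ℂ) A x) i = A i 0 * x 0 + A i 1 * x 1 := by
    intro i
    rw [Matrix.ofLp_toEuclideanCLM]
    simp [Matrix.mulVec, dotProduct, Fin.sum_univ_two]
  rw [hc, hc]
  have hb : ∀ i, ‖A i 0 * x 0 + A i 1 * x 1‖ ≤ (‖A i 0‖ + ‖A i 1‖) * ‖x‖ := by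
    intro i
    refine (norm_add_le _ _).trans ?_
    rw [norm_mul, norm_mul, add_mul]
    gcongr
  have := hb 0
  have := hb 1
  linarith

/-- the upper triangular form of the products -/
def triP (S V p : ℕ → ℂ) (n : ℕ) : Matrix (Fin 2) (Fin 2) ℂ :=
  !![∏ m ∈ Finset.range n, S m,
     ∑ j ∈ Finset.range n, (∏ m ∈ Finset.range j, S m) * V j * ((∏ m ∈ Finset.range n, p m) / ∏ m ∈ Finset.range (j+1), p m);
     0, ∏ m ∈ Finset.range n, p m]

/-- inverse of the upper triangular form -/
def triI (S V p : ℕ → ℂ) (n : ℕ) : Matrix (Fin 2) (Fin 2) ℂ :=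
  !![(∏ m ∈ Finset.range n, S m)⁻¹,
     - ∑ j ∈ Finset.range n, ((∏ m ∈ Finset.range j, S m) / ∏ m ∈ Finset.range n, S m) * V j * (∏ m ∈ Finset.range (j+1), p m)⁻¹;
     0, (∏ m ∈ Finset.range n, p m)⁻¹]

lemma triP_succ (S V p : ℕ → ℂ) (hp : ∀ m, p m ≠ 0) (n : ℕ) :
    triP S V p (n+1) = triP S V p n * !![S n, V n; 0, p n] := by
  have h1 : ∏ m ∈ Finset.range (n+1), p m ≠ 0 := Finset.prod_ne_zero_iff.2 fun m _ => hp m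
  have h : ∑ j ∈ Finset.range (n+1), (∏ m ∈ Finset.range j, S m) * V j *
      ((∏ m ∈ Finset.range (n+1), p m) / ∏ m ∈ Finset.range (j+1), p m) =
      (∏ m ∈ Finset.range n, S m) * V n + (∑ j ∈ Finset.range n, (∏ m ∈ Finset.range j, S m) * V j *
      ((∏ m ∈ Finset.range n, p m) / ∏ m ∈ Finset.range (j+1), p m)) * p n := by
    rw [Finset.sum_range_succ, div_self h1, mul_one, add_comm, Finset.sum_mul]
    congr 1
    refine Finset.sum_congr rfl fun j _ => ?_
    rw [Finset.prod_range_succ p n]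
    ring
  ext i j
  fin_cases i <;> fin_cases j
  · simp [triP, Matrix.mul_apply, Fin.sum_univ_two, Finset.prod_range_succ]
  · simpa [triP, Matrix.mul_apply, Fin.sum_univ_two] using h
  · simp [triP, Matrix.mul_apply, Fin.sum_univ_two]
  · simp [triP, Matrix.mul_apply, Fin.sum_univ_two, Finset.prod_range_succ]

lemma triP_mul_triI (S V p : ℕ → ℂ) (hS : ∀ m, S m ≠ 0) (hp : ∀ m, p m ≠ 0) (n : ℕ) :
    triP S V p n * triI S V p n = 1 := by
  have h1 : ∏ m ∈ Finset.range n, p m ≠ 0 := Finset.prod_ne_zero_iff.2 fun m _ => hp m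
  have h2 : ∏ m ∈ Finset.range n, S m ≠ 0 := Finset.prod_ne_zero_iff.2 fun m _ => hS m
  ext i j
  fin_cases i <;> fin_cases j
  · simp [triP, triI, Matrix.mul_apply, Fin.sum_univ_two, h2]
  · simp only [triP, triI, Matrix.mul_apply, Fin.sum_univ_two]
    simp only [Fin.zero_eta, Fin.mk_one, Matrix.of_apply, Matrix.cons_val', Matrix.cons_val_zero,
      Matrix.cons_val_one, Matrix.cons_val_fin_one, Fin.isValue]
    rw [mul_neg, Finset.mul_sum, Finset.sum_mul, Matrix.one_apply_ne (by decide), neg_add_eq_zero]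
    refine Finset.sum_congr rfl fun j _ => ?_
    have h3 : ∏ m ∈ Finset.range (j+1), p m ≠ 0 := Finset.prod_ne_zero_iff.2 fun m _ => hp m
    field_simp
  · simp [triP, triI, Matrix.mul_apply, Fin.sum_univ_two]
  · simp [triP, triI, Matrix.mul_apply, Fin.sum_univ_two, h1]

lemma det_inv (S V p : ℕ → ℂ) (hS : ∀ m, S m ≠ 0) (hp : ∀ m, p m ≠ 0) (n : ℕ) :
    ((((List.range n).map fun m => PP * !![S m, V m; 0, p m] * PI)).prod)⁻¹
      = PP * triI S V p n * PI := by
  have h : ((((List.range n).map fun m => PP * !![S m, V m; 0, p m] * PI)).prod)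
      = PP * triP S V p n * PI := by
    induction n with
    | zero =>
      have : triP S V p 0 = 1 := by
        ext i j; fin_cases i <;> fin_cases j <;> simp [triP]
      simp [this, PP_PI]
    | succ n ih =>
      rw [List.range_succ, List.map_append, List.prod_append, ih, triP_succ S V p hp]
      simp only [List.map_cons, List.map_nil, List.prod_cons, List.prod_nil, mul_one]
      calc PP * triP S V p n * PI * (PP * !![S n, V n; 0, p n] * PI)
          = PP * triP S V p n * (PI * PP) * (!![S n, V n; 0, p n] * PI) := by
            simp only [Matrix.mul_assoc]
        _ = _ := by rw [PI_PP, mul_one]; simp only [Matrix.mul_assoc]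
  rw [h]
  apply Matrix.inv_eq_right_inv
  calc PP * triP S V p n * PI * (PP * triI S V p n * PI)
      = PP * triP S V p n * (PI * PP) * (triI S V p n * PI) := by
        simp only [Matrix.mul_assoc]
    _ = PP * (triP S V p n * triI S V p n) * PI := by
        rw [PI_PP, mul_one]; simp only [Matrix.mul_assoc]
    _ = 1 := by rw [triP_mul_triI S V p hS hp, mul_one, PP_PI]

lemma tri_lower (T : Matrix (Fin 2) (Fin 2) ℂ) :
    ‖T 1 1‖ ≤ opNorm PI * opNorm (PP * T * PI) * opNorm PP := by
  have : T = PI * (PP * T * PI) * PP := by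
    calc T = (PI * PP) * T * (PI * PP) := by rw [PI_PP]; simp
      _ = _ := by simp only [Matrix.mul_assoc]
  calc ‖T 1 1‖ ≤ opNorm T := entry_le_opNorm T 1 1
    _ = opNorm (PI * (PP * T * PI) * PP) := by rw [← this]
    _ ≤ opNorm (PI * (PP * T * PI)) * opNorm PP := opNorm_mul_le _ _
    _ ≤ _ := by
      gcongr
      · exact opNorm_nonneg _
      · exact opNorm_mul_le _ _

lemma tri_upper (T : Matrix (Fin 2) (Fin 2) ℂ) :
    opNorm (PP * T * PI) ≤ opNorm PP * opNorm PI * (‖T 0 0‖ + ‖T 0 1‖ + ‖T 1 0‖ + ‖T 1 1‖) := by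
  calc opNorm (PP * T * PI) ≤ opNorm (PP * T) * opNorm PI := opNorm_mul_le _ _
    _ ≤ opNorm PP * opNorm T * opNorm PI := by
      gcongr
      · exact opNorm_nonneg _
      · exact opNorm_mul_le _ _
    _ ≤ opNorm PP * (‖T 0 0‖ + ‖T 0 1‖ + ‖T 1 0‖ + ‖T 1 1‖) * opNorm PI := by
      have := opNorm_nonneg PP
      have := opNorm_nonneg PI
      gcongr
      exact opNorm_le_sum T
    _ = _ := by ring

lemma PP_pos : 0 < opNorm PP :=
  lt_of_lt_of_le (by simp [PP]) (entry_le_opNorm PP 0 0)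
lemma PI_pos : 0 < opNorm PI :=
  lt_of_lt_of_le (by simp [PI]) (entry_le_opNorm PI 1 1)

lemma log_tendsto (a : ℕ → ℝ) (c : ℝ) (hc : 0 < c) (hlow : ∀ n, c ≤ a n)
    (hup : ∀ ε > 0, ∃ C > 0, ∀ n : ℕ, a n ≤ C * (n + 1) * Real.exp (ε * n)) :
    Tendsto (fun n : ℕ => (1 / n : ℝ) * Real.log (a n)) atTop (nhds 0) := by
  have hinv : Tendsto (fun n : ℕ => (1 / n : ℝ)) atTop (nhds 0) := tendsto_one_div_atTop_nhds_zero_nat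
  rw [Metric.tendsto_atTop']
  intro ε hε
  obtain ⟨C, hC0, hC⟩ := hup (ε / 4) (by positivity)
  have hlogn : Tendsto (fun n : ℕ => (1 / n : ℝ) * Real.log (n + 1)) atTop (nhds 0) := by
    have h1 : Tendsto (fun x : ℝ => Real.log x / x) atTop (nhds 0) := by
      simpa using Real.isLittleO_log_id_atTop.tendsto_div_nhds_zero
    have h2 := (h1.comp (tendsto_natCast_atTop_atTop (R := ℝ))).comp (tendsto_add_atTop_nat 1)
    have h3 : Tendsto (fun n : ℕ => (1 : ℝ) + 1 / n) atTop (nhds (1 + 0)) := tendsto_const_nhds.add hinv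
    have h4 := h2.mul h3
    rw [zero_mul] at h4
    refine h4.congr' ?_
    filter_upwards [eventually_gt_atTop 0] with n hn
    simp only [Function.comp]
    push_cast
    have : (n : ℝ) ≠ 0 := by positivity
    field_simp
  have hA : ∀ᶠ n : ℕ in atTop, (1 / n : ℝ) * Real.log C < ε / 4 := by
    have := hinv.mul_const (Real.log C)
    rw [zero_mul] at this
    exact this.eventually_lt_const (by positivity)
  have hB : ∀ᶠ n : ℕ in atTop, (1 / n : ℝ) * Real.log (n + 1) < ε / 4 :=
    hlogn.eventually_lt_const (by positivity)
  have hD : ∀ᶠ n : ℕ in atTop, -ε < (1 / n : ℝ) * Real.log c := by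
    have := hinv.mul_const (Real.log c)
    rw [zero_mul] at this
    exact this.eventually_const_lt (by linarith)
  have hE := hA.and (hB.and (hD.and (eventually_gt_atTop 0)))
  obtain ⟨N, hN⟩ := eventually_atTop.1 hE
  refine ⟨N, fun n hn => ?_⟩
  obtain ⟨h1, h2, h3, h4⟩ := hN n hn.le
  have hn0 : (0 : ℝ) < n := by exact_mod_cast h4
  rw [Real.dist_eq, sub_zero, abs_lt]
  constructor
  · refine h3.trans_le ?_
    have := Real.log_le_log hc (hlow n)
    gcongr
  · have h5 := Real.log_le_log (hc.trans_le (hlow n)) (hC n)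
    rw [Real.log_mul (by positivity) (by positivity), Real.log_mul (by positivity) (by positivity),
      Real.log_exp] at h5
    have h6 : (1 / n : ℝ) * Real.log (a n) ≤ (1 / n : ℝ) * (Real.log C + Real.log (n + 1) + ε / 4 * n) := by
      gcongr
    have h7 : (1 / n : ℝ) * (Real.log C + Real.log (n + 1) + ε / 4 * n)
        = (1 / n : ℝ) * Real.log C + (1 / n : ℝ) * Real.log (n + 1) + ε / 4 := by
      field_simp
    linarith

lemma det_main (S V p : ℕ → ℂ) (hS : ∀ m, S m ≠ 0) (hp : ∀ m, p m ≠ 0) (K : ℝ)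
    (hV : ∀ m, ‖V m‖ ≤ K)
    (hSb : ∀ ε > 0, ∃ C > 0, ∀ j n : ℕ, j ≤ n →
        ∏ m ∈ Finset.range j, ‖S m‖ ≤ C * Real.exp (ε * n) * ∏ m ∈ Finset.range n, ‖S m‖)
    (hpb : ∀ ε > 0, ∃ C > 0, ∀ j n : ℕ, j ≤ n →
        ∏ m ∈ Finset.range j, ‖p m‖ ≤ C * Real.exp (ε * n) * ∏ m ∈ Finset.range n, ‖p m‖)
    (D : ℝ) (hD0 : 0 < D) (hD : ∀ n, ∏ m ∈ Finset.range n, ‖p m‖ ≤ D) :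
    Tendsto (fun n : ℕ => (1 / n : ℝ) * Real.log (opNorm
      (((((List.range n).map fun m => PP * !![S m, V m; 0, p m] * PI)).prod)⁻¹))) atTop (nhds 0) := by
  have hPP := PP_pos
  have hPI := PI_pos
  have hK : 0 ≤ K := (norm_nonneg _).trans (hV 0)
  have hpP : ∀ n, 0 < ∏ m ∈ Finset.range n, ‖p m‖ :=
    fun n => Finset.prod_pos fun m _ => norm_pos_iff.2 (hp m)
  have hSP : ∀ n, 0 < ∏ m ∈ Finset.range n, ‖S m‖ :=
    fun n => Finset.prod_pos fun m _ => norm_pos_iff.2 (hS m)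
  simp only [det_inv S V p hS hp]
  refine log_tendsto _ (1 / (D * (opNorm PI * opNorm PP))) (by positivity) (fun n => ?_) ?_
  · have h := tri_lower (triI S V p n)
    have h1 : 1 / D ≤ ‖triI S V p n 1 1‖ := by
      simp only [triI, Matrix.of_apply, Matrix.cons_val', Matrix.cons_val_one, Matrix.cons_val_fin_one,
        norm_inv, norm_prod]
      rw [← one_div]
      exact one_div_le_one_div_of_le (hpP n) (hD n)
    have h2 := h1.trans h
    rw [div_le_iff₀ hD0] at h2
    rw [div_le_iff₀ (by positivity)]
    linarith
  · intro ε hε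
    obtain ⟨C, hC0, hC⟩ := hSb (ε / 2) (by positivity)
    obtain ⟨E, hE0, hE⟩ := hpb (ε / 2) (by positivity)
    refine ⟨opNorm PP * opNorm PI * (C + C * K * E * Real.exp (ε / 2) + E), by positivity, fun n => ?_⟩
    refine (tri_upper _).trans ?_
    have hexp1 : ∀ n : ℕ, Real.exp (ε / 2 * n) ≤ Real.exp (ε * n) := by
      intro n; apply Real.exp_le_exp.2; gcongr; linarith
    have h1n : (1 : ℝ) ≤ n + 1 := by linarith [(Nat.cast_nonneg n : (0:ℝ) ≤ n)]
    have hSi : ∀ j n : ℕ, j ≤ n → (∏ m ∈ Finset.range j, ‖S m‖) / ∏ m ∈ Finset.range n, ‖S m‖ ≤ C * Real.exp (ε / 2 * n) := by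
      intro j n hjn
      rw [div_le_iff₀ (hSP n)]
      exact hC j n hjn
    have hpi : ∀ n : ℕ, (∏ m ∈ Finset.range n, ‖p m‖)⁻¹ ≤ E * Real.exp (ε / 2 * n) := by
      intro n
      rw [inv_le_iff_one_le_mul₀ (hpP n)]
      simpa using hE 0 n (Nat.zero_le _)
    have b00 : ‖triI S V p n 0 0‖ ≤ C * (n + 1) * Real.exp (ε * n) := by
      simp only [triI, Matrix.of_apply, Matrix.cons_val', Matrix.cons_val_zero, Matrix.cons_val_fin_one,
        norm_inv, norm_prod]
      have := hSi 0 n (Nat.zero_le _)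
      simp only [Finset.range_zero, Finset.prod_empty, one_div] at this
      refine this.trans ?_
      gcongr ?_ * ?_
      · nlinarith
      · exact hexp1 n
    have b11 : ‖triI S V p n 1 1‖ ≤ E * (n + 1) * Real.exp (ε * n) := by
      simp only [triI, Matrix.of_apply, Matrix.cons_val', Matrix.cons_val_one, Matrix.cons_val_fin_one,
        norm_inv, norm_prod]
      refine (hpi n).trans ?_
      gcongr ?_ * ?_
      · nlinarith
      · exact hexp1 n
    have b10 : ‖triI S V p n 1 0‖ = 0 := by
      simp [triI]
    have b01 : ‖triI S V p n 0 1‖ ≤ C * K * E * Real.exp (ε / 2) * (n + 1) * Real.exp (ε * n) := by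
      simp only [triI, Matrix.of_apply, Matrix.cons_val', Matrix.cons_val_zero, Matrix.cons_val_one,
        Matrix.cons_val_fin_one, norm_neg]
      refine (norm_sum_le _ _).trans ?_
      have ht : ∀ j ∈ Finset.range n, ‖((∏ m ∈ Finset.range j, S m) / ∏ m ∈ Finset.range n, S m) * V j * (∏ m ∈ Finset.range (j+1), p m)⁻¹‖ ≤ C * K * E * Real.exp (ε / 2) * Real.exp (ε * n) := by
        intro j hj
        have hj' : j < n := Finset.mem_range.1 hj
        rw [norm_mul, norm_mul, norm_div, norm_inv, norm_prod, norm_prod, norm_prod]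
        have e1 := hSi j n hj'.le
        have e2 := hpi (j+1)
        have e3 : Real.exp (ε / 2 * ((j + 1 : ℕ) : ℝ)) ≤ Real.exp (ε / 2 * n) * Real.exp (ε / 2) := by
          rw [← Real.exp_add]
          apply Real.exp_le_exp.2
          push_cast
          have : (j : ℝ) ≤ n := by exact_mod_cast hj'.le
          nlinarith
        have e4 : Real.exp (ε * n) = Real.exp (ε / 2 * n) * Real.exp (ε / 2 * n) := by
          rw [← Real.exp_add]; congr 1; ring
        have e5 := (hpP (j+1)).le
        calc _ ≤ (C * Real.exp (ε / 2 * n)) * K * (E * (Real.exp (ε / 2 * n) * Real.exp (ε / 2))) := by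
              gcongr
              · exact hV j
              · exact e2.trans (by gcongr)
          _ = _ := by rw [e4]; ring
      refine (Finset.sum_le_card_nsmul _ _ _ ht).trans ?_
      rw [Finset.card_range, nsmul_eq_mul]
      have hpos : 0 ≤ C * K * E * Real.exp (ε / 2) * Real.exp (ε * n) := by positivity
      nlinarith
    have hsum : ‖triI S V p n 0 0‖ + ‖triI S V p n 0 1‖ + ‖triI S V p n 1 0‖ + ‖triI S V p n 1 1‖
      ≤ (C + C * K * E * Real.exp (ε / 2) + E) * (n + 1) * Real.exp (ε * n) := by
      rw [b10]; linarith
    calc _ ≤ opNorm PP * opNorm PI * ((C + C * K * E * Real.exp (ε / 2) + E) * (n + 1) * Real.exp (ε * n)) := by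
          gcongr
      _ = _ := by ring
lemma lc_int (G : ℤ[X]) (hG : G.map (Int.castRingHom ℂ) ≠ 0) :
    1 ≤ ‖(G.map (Int.castRingHom ℂ)).leadingCoeff‖ := by
  have hG0 : G ≠ 0 := by rintro rfl; simp at hG
  rw [leadingCoeff_map_of_injective (Int.cast_injective)]
  have h : G.leadingCoeff ≠ 0 := leadingCoeff_ne_zero.2 hG0
  have := Int.one_le_abs h
  rw [eq_intCast, Complex.norm_intCast]
  exact_mod_cast this

lemma posPoly_map {L : ℕ} (s : Finset (Fin L)) :
    posPoly s = (∑ z ∈ s, (X : ℤ[X]) ^ (z : ℕ)).map (Int.castRingHom ℂ) := by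
  simp [posPoly, Polynomial.map_sum]

lemma norm_e (k : ℝ) : ‖e k‖ = 1 := by
  rw [e_eq]; exact Circle.norm_coe _

lemma posPoly_bound {L : ℕ} (s : Finset (Fin L)) (k : ℝ) : ‖(posPoly s).eval (e k)‖ ≤ L := by
  rw [posPoly, eval_finsetSum]
  refine (norm_sum_le _ _).trans ?_
  simp only [eval_pow, eval_X, norm_pow, norm_e, one_pow, Finset.sum_const, nsmul_eq_mul, mul_one]
  have := s.card_le_univ
  rw [Fintype.card_fin] at this
  exact_mod_cast this

lemma posPoly_sum {L : ℕ} (wa wb : Fin L → Fin 2) :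
    posPoly (Ca wa wb) + posPoly (Cb wa wb) + posPoly (Pa wa wb) + posPoly (Pb wa wb)
      = ∑ i ∈ Finset.range L, (X : ℂ[X]) ^ i := by
  rw [← Fin.sum_univ_eq_sum_range (fun i => (X : ℂ[X]) ^ i)]
  simp only [posPoly, Ca, Cb, Pa, Pb, Finset.sum_filter, ← Finset.sum_add_distrib]
  refine Finset.sum_congr rfl fun i _ => ?_
  generalize wa i = x
  generalize wb i = y
  fin_cases x <;> fin_cases y <;> simp

lemma FourierB_eq {L : ℕ} (wa wb : Fin L → Fin 2) (k : ℝ) :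
    FourierB wa wb k = PP * !![(posPoly (Pa wa wb) - posPoly (Pb wa wb)).eval (e k),
      ((posPoly (Ca wa wb)).eval (e k) - (posPoly (Cb wa wb)).eval (e k)) / 2;
      0, (posPoly (Ca wa wb) + posPoly (Cb wa wb) + posPoly (Pa wa wb) + posPoly (Pb wa wb)).eval (e k)] * PI := by
  ext i j
  fin_cases i <;> fin_cases j <;>
  · simp [FourierB, PP, PI, Matrix.mul_apply, Fin.sum_univ_two]
    ring

lemma e_succ (L m : ℕ) (k : ℝ) : e ((L : ℝ) ^ (m + 1) * k) = e ((L : ℝ) ^ m * k) ^ L := by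
  rw [e, e, ← Complex.exp_nat_mul]
  congr 1
  push_cast
  ring

lemma tele (L : ℕ) (k : ℝ) (n : ℕ) :
    (∏ m ∈ Finset.range n, (∑ i ∈ Finset.range L, (X : ℂ[X]) ^ i).eval (e ((L : ℝ) ^ m * k))) * (e k - 1)
      = e ((L : ℝ) ^ n * k) - 1 := by
  induction n with
  | zero => simp
  | succ n ih =>
    rw [Finset.prod_range_succ, mul_right_comm, ih, e_succ, mul_comm]
    rw [eval_finsetSum]
    simp only [eval_pow, eval_X]
    exact geom_sum_mul _ _

/-- For a binary constant-length substitution of length `L ≥ 2` with `Q ≠ R`,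
for Lebesgue-a.e. `k` the matrices `B(L^m k)` are invertible for all `m ≥ 0` and
`lim (1/n) log ‖(B(k)·B(Lk)⋯B(L^{n-1}k))⁻¹‖ = 0`; equivalently, the maximal Lyapunov exponent
of the outward cocycle is `χ_max(k) = log √L` almost everywhere. -/
theorem binary_substitution_max_Lyapunov_exponent
    (L : ℕ) (hL : 2 ≤ L) (wa wb : Fin L → Fin 2)
    (hQR : posPoly (Pa wa wb) ≠ posPoly (Pb wa wb)) :
    ∀ᵐ k : ℝ,
      (∀ m : ℕ, IsUnit (FourierB wa wb ((L : ℝ) ^ m * k))) ∧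
      Tendsto (fun n : ℕ => (1 / n : ℝ) * Real.log (opNorm ((cocycleProd wa wb k n)⁻¹)))
        atTop (nhds 0) := by
  have hS1 : 1 ≤ ‖(posPoly (Pa wa wb) - posPoly (Pb wa wb)).leadingCoeff‖ := by
    have h0 : posPoly (Pa wa wb) - posPoly (Pb wa wb) ≠ 0 := sub_ne_zero.2 hQR
    rw [posPoly_map, posPoly_map, ← Polynomial.map_sub] at h0 ⊢
    exact lc_int _ h0
  have hp1 : 1 ≤ ‖(∑ i ∈ Finset.range L, (X : ℂ[X]) ^ i).leadingCoeff‖ := by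
    have : (∑ i ∈ Finset.range L, (X : ℂ[X]) ^ i)
        = (∑ i ∈ Finset.range L, (X : ℤ[X]) ^ i).map (Int.castRingHom ℂ) := by
      simp [Polynomial.map_sum]
    rw [this]
    apply lc_int
    rw [← this]
    intro h
    have h1 := congrArg (Polynomial.eval 1) h
    rw [eval_finsetSum] at h1
    simp at h1
    omega
  have hX1 : 1 ≤ ‖(X - C 1 : ℂ[X]).leadingCoeff‖ := by
    rw [leadingCoeff_X_sub_C]; simp
  filter_upwards [poly_bound L hL _ hS1, poly_bound L hL _ hp1, poly_bound L hL _ hX1]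
    with k ⟨hS, hSb⟩ ⟨hp, hpb⟩ ⟨hX, _⟩
  have hk : e k - 1 ≠ 0 := by simpa using hX 0
  constructor
  · intro m
    rw [FourierB_eq, posPoly_sum]
    have h1 : IsUnit PP := IsUnit.of_mul_eq_one PI PP_PI
    have h2 : IsUnit PI := IsUnit.of_mul_eq_one PP PI_PP
    refine (h1.mul ?_).mul h2
    rw [Matrix.isUnit_iff_isUnit_det, Matrix.det_fin_two_of]
    rw [mul_zero, sub_zero]
    exact (mul_ne_zero (hS m) (hp m)).isUnit
  · have hmain := det_main
      (fun m => (posPoly (Pa wa wb) - posPoly (Pb wa wb)).eval (e ((L : ℝ) ^ m * k)))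
      (fun m => ((posPoly (Ca wa wb)).eval (e ((L : ℝ) ^ m * k)) - (posPoly (Cb wa wb)).eval (e ((L : ℝ) ^ m * k))) / 2)
      (fun m => (∑ i ∈ Finset.range L, (X : ℂ[X]) ^ i).eval (e ((L : ℝ) ^ m * k)))
      hS hp L ?_ hSb hpb (2 / ‖e k - 1‖) (by positivity) ?_
    · unfold cocycleProd
      simp only [FourierB_eq, posPoly_sum]
      exact hmain
    · intro m
      rw [norm_div]
      have h1 := norm_sub_le ((posPoly (Ca wa wb)).eval (e ((L : ℝ) ^ m * k))) ((posPoly (Cb wa wb)).eval (e ((L : ℝ) ^ m * k)))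
      have h2 := posPoly_bound (Ca wa wb) ((L : ℝ) ^ m * k)
      have h3 := posPoly_bound (Cb wa wb) ((L : ℝ) ^ m * k)
      rw [Complex.norm_ofNat, div_le_iff₀ (by norm_num)]
      linarith
    · intro n
      rw [le_div_iff₀ (norm_pos_iff.2 hk), ← norm_prod, ← norm_mul, tele]
      refine (norm_sub_le _ _).trans ?_
      rw [norm_e, norm_one]
      norm_num
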